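/- Let C be a quasiminimal pregeometry class, H, H' ∈ C, let G ⊆ H and G' ⊆ H' be countable closed or empty, let g : G → G' be an isomorphism, and let g ∪ f : H ⇀ H' be a partial embedding with X = dom(f) and X' = img(f) finite. Then g ∪ f extends to an isomorphism ĝ : cl(X ∪ G) → cl(X' ∪ G'). -/

import Mathlib

open FirstOrder FirstOrder.Language Set Cardinal



universe u u' v w

namespace QM

variable {L : FirstOrder.Language.{v, w}}

/-- Formulas of `L_{ω₁,ω}`: built from atomic formulas by negation, countable
conjunction (indexed by `ℕ`), and universal quantification; `α` is the type of free
variables and `n` counts the de Bruijn bound variables. Countable disjunctions and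
the existential quantifier are definable via negation. -/
inductive InfFormula (L : FirstOrder.Language.{v, w}) (α : Type u) : ℕ → Type (max u v w)
  | falsum {n : ℕ} : InfFormula L α n
  | equal {n : ℕ} (t₁ t₂ : L.Term (α ⊕ (Fin n))) : InfFormula L α n
  | rel {n l : ℕ} (R : L.Relations l) (ts : Fin l → L.Term (α ⊕ (Fin n))) : InfFormula L α n
  | not {n : ℕ} (φ : InfFormula L α n) : InfFormula L α n
  | iInf {n : ℕ} (φ : ℕ → InfFormula L α n) : InfFormula L α n
  | all {n : ℕ} (φ : InfFormula L α (n + 1)) : InfFormula L α n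

/-- Satisfaction of an `L_{ω₁,ω}`-formula in an `L`-structure `M`, given an
assignment `v` of the free variables and `xs` of the bound variables. -/
def InfFormula.Realize {M : Type u'} [L.Structure M] {α : Type u} :
    ∀ {n : ℕ}, InfFormula L α n → (α → M) → (Fin n → M) → Prop
  | _, .falsum, _, _ => False
  | _, .equal t₁ t₂, v, xs => t₁.realize (Sum.elim v xs) = t₂.realize (Sum.elim v xs)
  | _, .rel R ts, v, xs => Structure.RelMap R (fun i => (ts i).realize (Sum.elim v xs))
  | _, .not φ, v, xs => ¬ φ.Realize v xs
  | _, .iInf φ, v, xs => ∀ i : ℕ, (φ i).Realize v xs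
  | _, .all φ, v, xs => ∀ x : M, φ.Realize v (Fin.snoc xs x)

/-- An `L_{ω₁,ω}`-sentence. -/
abbrev InfSentence (L : FirstOrder.Language.{v, w}) := InfFormula L PEmpty 0

/-- Satisfaction of an `L_{ω₁,ω}`-sentence. -/
def InfSentence.RealizeS (M : Type u') [L.Structure M] (φ : InfSentence L) : Prop :=
  InfFormula.Realize (M := M) φ PEmpty.elim (fun i => i.elim0)

/-- Satisfaction of an `L_{ω₁,ω}`-formula with parameters from the set `A`
and `m` free variables `v̄`, at the tuple `v`. -/
def InfFormula.RealizeP {M : Type u'} [L.Structure M] {A : Set M} {m : ℕ}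
    (φ : InfFormula L (↥A ⊕ Fin m) 0) (v : Fin m → M) : Prop :=
  φ.Realize (Sum.elim Subtype.val v) (fun i => i.elim0)

/-- The domain of a partial map, viewed as a graph (set of pairs). -/
def pdom {H : Type*} {H' : Type*} (p : Set (H × H')) : Set H := Prod.fst '' p

/-- The image of a partial map, viewed as a graph (set of pairs). -/
def pimg {H : Type*} {H' : Type*} (p : Set (H × H')) : Set H' := Prod.snd '' p

/-- The image of a set `X` under a partial map given as a graph. -/
def pimage {H : Type*} {H' : Type*} (p : Set (H × H')) (X : Set H) : Set H' :=
  {b | ∃ a ∈ X, (a, b) ∈ p}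

/-- A partial map (given as its graph `p`) is a partial embedding if it preserves
quantifier-free first-order formulas. (This forces `p` to be the graph of an
injective partial function.) -/
def IsPartialEmbedding {H : Type u} {H' : Type u} [L.Structure H] [L.Structure H']
    (p : Set (H × H')) : Prop :=
  ∀ (n : ℕ) (φ : L.Formula (Fin n)), BoundedFormula.IsQF φ →
    ∀ (a : Fin n → H) (b : Fin n → H'), (∀ i, (a i, b i) ∈ p) →
      (φ.Realize a ↔ φ.Realize b)

/-- A partial map is a σ-embedding if it is a partial embedding and preserves all
`L_{ω₁,ω}`-formulas with (possibly infinitely many) parameters from its domain;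
equivalently `⟨M, m⟩_{m ∈ dom p} ≡_{ω₁,ω} ⟨N, p(m)⟩_{m ∈ dom p}`. -/
def IsSigmaEmbedding {H : Type u} {H' : Type u} [L.Structure H] [L.Structure H']
    (p : Set (H × H')) : Prop :=
  IsPartialEmbedding (L := L) p ∧
    ∀ (φ : InfFormula L (↥(pdom p)) 0) (b : ↥(pdom p) → H'),
      (∀ x : ↥(pdom p), ((x : H), b x) ∈ p) →
        (φ.Realize Subtype.val (fun i => i.elim0) ↔ φ.Realize b (fun i => i.elim0))

/-- A pregeometry (combinatorial geometry) on a set. -/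
structure IsPregeometry {α : Type*} (cl : Set α → Set α) : Prop where
  subset_cl : ∀ X, X ⊆ cl X
  mono : ∀ ⦃X Y : Set α⦄, X ⊆ Y → cl X ⊆ cl Y
  idem : ∀ X, cl (cl X) = cl X
  finChar : ∀ (X : Set α) (y : α), y ∈ cl X → ∃ F : Finset α, ↑F ⊆ X ∧ y ∈ cl ↑F
  exchange : ∀ (X : Set α) (a b : α), a ∈ cl (X ∪ {b}) → a ∉ cl X → b ∈ cl (X ∪ {a})

/-- A pair `⟨H, cl_H⟩` of an `L`-structure and a closure operator on it. -/
structure QMObj (L : FirstOrder.Language.{v, w}) where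
  carrier : Type u
  [str : L.Structure carrier]
  cl : Set carrier → Set carrier

attribute [instance] QMObj.str

/-- `G` is countable and closed, or empty. -/
def CCOE (H : QMObj.{u} L) (G : Set H.carrier) : Prop :=
  (G.Countable ∧ H.cl G = G) ∨ G = ∅

/-- The axioms for a class of pairs `⟨H, cl_H⟩` to be a quasiminimal pregeometry class. -/
structure IsQMClass (C : Set (QMObj.{u} L)) : Prop where
  /-- Closure under isomorphisms, transporting the closure operator. -/
  iso_closed : ∀ H ∈ C, ∀ (N : Type u) [_iN : L.Structure N] (f : H.carrier ≃[L] N),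
      (⟨N, fun X => f '' (H.cl (f ⁻¹' X))⟩ : QMObj L) ∈ C
  /-- Any two members satisfy the same quantifier-free sentences. -/
  qf_theory : ∀ H ∈ C, ∀ H' ∈ C, ∀ (φ : L.Sentence), BoundedFormula.IsQF φ →
      (H.carrier ⊨ φ ↔ H'.carrier ⊨ φ)
  /-- Each `cl_H` is a pregeometry. -/
  pregeom : ∀ H ∈ C, IsPregeometry H.cl
  /-- The closure of a finite set is countable. -/
  cl_finite_countable : ∀ H ∈ C, ∀ X : Set H.carrier, X.Finite → (H.cl X).Countable
  /-- The closure of any set is (the underlying set of) a substructure which, with the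
  restricted closure operator, is again a member of the class. -/
  cl_mem : ∀ H ∈ C, ∀ X : Set H.carrier, ∃ S : L.Substructure H.carrier,
      (S : Set H.carrier) = H.cl X ∧
      (⟨↥S, fun Y => Subtype.val ⁻¹' (H.cl (Subtype.val '' Y))⟩ : QMObj L) ∈ C
  /-- Partial embeddings preserve and reflect the closure relation. -/
  cl_embedding : ∀ H ∈ C, ∀ H' ∈ C, ∀ (p : Set (H.carrier × H'.carrier)),
      IsPartialEmbedding (L := L) p → ∀ X ⊆ pdom p, ∀ (y : H.carrier) (y' : H'.carrier),
        (y, y') ∈ p → (y ∈ H.cl X ↔ y' ∈ H'.cl (pimage p X))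
  /-- ℵ₀-homogeneity over countable closed models, part (i): an isomorphism between
  countable closed (or empty) sets extends by any pair of independent points. -/
  homogeneity₁ : ∀ H ∈ C, ∀ H' ∈ C, ∀ (g : Set (H.carrier × H'.carrier)),
      CCOE H (pdom g) → CCOE H' (pimg g) → IsPartialEmbedding (L := L) g →
      ∀ (x : H.carrier) (x' : H'.carrier), x ∉ H.cl (pdom g) → x' ∉ H'.cl (pimg g) →
        IsPartialEmbedding (L := L) (g ∪ {(x, x')})
  /-- ℵ₀-homogeneity over countable closed models, part (ii). -/
  homogeneity₂ : ∀ H ∈ C, ∀ H' ∈ C, ∀ (g f : Set (H.carrier × H'.carrier)),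
      CCOE H (pdom g) → CCOE H' (pimg g) → IsPartialEmbedding (L := L) g →
      (pdom f).Finite → IsPartialEmbedding (L := L) (g ∪ f) →
      ∀ y ∈ H.cl (pdom f ∪ pdom g), ∃ y' : H'.carrier,
        IsPartialEmbedding (L := L) (g ∪ f ∪ {(y, y')})


/-- `p` is a σ-type over `A` in `m` variables: every countable subset of `p` is
consistent with the structure, i.e. simultaneously satisfiable. -/
def IsSigmaType {M : Type u'} [L.Structure M] {A : Set M} {m : ℕ}
    (p : Set (InfFormula L (↥A ⊕ Fin m) 0)) : Prop :=
  ∀ Φ ⊆ p, Φ.Countable → ∃ v : Fin m → M, ∀ φ ∈ Φ, φ.RealizeP v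

/-- A σ-type `p` is isolated if there is a consistent `L_{ω₁,ω}`-formula `ψ(x̄)`
(possibly with parameters from `M`) such that `ψ` implies every formula of `p`. -/
def IsIsolated {M : Type u'} [L.Structure M] {A : Set M} {m : ℕ}
    (p : Set (InfFormula L (↥A ⊕ Fin m) 0)) : Prop :=
  ∃ ψ : InfFormula L (M ⊕ Fin m) 0,
    (∃ v : Fin m → M, ψ.Realize (Sum.elim id v) (fun i => i.elim0)) ∧
    ∀ φ ∈ p, ∀ v : Fin m → M, ψ.Realize (Sum.elim id v) (fun i => i.elim0) → φ.RealizeP v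

/-- A σ-type `p` is realised if some tuple satisfies every formula of `p`. -/
def IsRealized {M : Type u'} [L.Structure M] {A : Set M} {m : ℕ}
    (p : Set (InfFormula L (↥A ⊕ Fin m) 0)) : Prop :=
  ∃ v : Fin m → M, ∀ φ ∈ p, φ.RealizeP v

/-- `B` is an independent subset of the pregeometry `⟨H, cl_H⟩`. -/
def IsIndep (H : QMObj.{u} L) (B : Set H.carrier) : Prop :=
  ∀ x ∈ B, x ∉ H.cl (B \ {x})

/-- `B` is a basis of the pregeometry `⟨H, cl_H⟩`: a maximal independent subset. -/
def IsBasis (H : QMObj.{u} L) (B : Set H.carrier) : Prop :=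
  IsIndep H B ∧ ∀ B' : Set H.carrier, B ⊆ B' → IsIndep H B' → B' = B

/-- The model-theoretic algebraic closure of `X` in `M`: the set of elements
satisfying some first-order formula with parameters in `X` having finitely many
solutions. -/
def aclS (L : FirstOrder.Language.{v, w}) (M : Type u) [L.Structure M] (X : Set M) :
    Set M :=
  {y | ∃ (n : ℕ) (φ : L.BoundedFormula (Fin n) 1) (v : Fin n → M),
    (∀ i, v i ∈ X) ∧ φ.Realize v ![y] ∧ {z : M | φ.Realize v ![z]}.Finite}


/-!
The isomorphism is built by back-and-forth. In a finite extension `p` of `g`, homogeneity over `g`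
supplies an image for any point of `cl (dom p)`; as partial embeddings preserve and reflect closure,
the image lies in `cl (im p)`, so neither closure grows and the step can be repeated. The inverse
maps satisfy the same hypotheses, which gives the steps back. Both closures are countable by finite
character, so countably many steps exhaust them.
-/

section PartialMap

variable {α β : Type*}

theorem pdom_inv (p : Set (α × β)) : pdom (SetRel.inv p) = pimg p := by
  rw [pdom, SetRel.inv, ← image_swap_eq_preimage_swap, image_image]
  rfl

theorem pimg_inv (p : Set (α × β)) : pimg (SetRel.inv p) = pdom p :=
  (pdom_inv (SetRel.inv p)).symm

theorem pdom_union (p q : Set (α × β)) : pdom (p ∪ q) = pdom p ∪ pdom q := image_union ..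

theorem pimg_union (p q : Set (α × β)) : pimg (p ∪ q) = pimg p ∪ pimg q := image_union ..

theorem pdom_insert (a : α) (b : β) (p : Set (α × β)) :
    pdom (insert (a, b) p) = insert a (pdom p) := image_insert_eq

theorem pimg_insert (a : α) (b : β) (p : Set (α × β)) :
    pimg (insert (a, b) p) = insert b (pimg p) := image_insert_eq

end PartialMap

section BackAndForth

theorem exists_directedOn_inter_nonempty {α ι : Type*} [Preorder α] [Countable ι] {S : Set α}
    {D : ι → Set α} (hD : ∀ i, ∀ s ∈ S, ∃ t ∈ S, s ≤ t ∧ t ∈ D i) {p : α} (hp : p ∈ S) :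
    ∃ I ⊆ S, p ∈ I ∧ DirectedOn (· ≤ ·) I ∧ ∀ i, (I ∩ D i).Nonempty := by
  have := Encodable.ofCountable ι
  let cofinals (i : ι) : Order.Cofinal S :=
    { carrier := Subtype.val ⁻¹' D i
      isCofinal := fun s =>
        let ⟨t, htS, hst, htD⟩ := hD i s s.2
        ⟨⟨t, htS⟩, htD, hst⟩ }
  let p₀ : S := ⟨p, hp⟩
  let u : ℕ → S := Order.sequenceOfCofinals p₀ cofinals
  have hu : Monotone (Subtype.val ∘ u) :=
    (Subtype.mono_coe (· ∈ S)).comp (Order.sequenceOfCofinals.monotone p₀ cofinals)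
  have hmeet (i : ι) : (u (Encodable.encode i + 1) : α) ∈ D i :=
    Order.sequenceOfCofinals.encode_mem p₀ cofinals i
  exact ⟨range (Subtype.val ∘ u), range_subset_iff.2 fun n => (u n).2, ⟨0, rfl⟩,
    directedOn_range.2 hu.directed_le, fun i => ⟨_, mem_range_self _, hmeet i⟩⟩

theorem exists_directedOn_of_back_and_forth {α β : Type*} {S : Set (Set (α × β))} {A : Set α}
    {B : Set β} (hA : A.Countable) (hB : B.Countable)
    (forth : ∀ a ∈ A, ∀ p ∈ S, ∃ q ∈ S, p ⊆ q ∧ a ∈ pdom q)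
    (back : ∀ b ∈ B, ∀ p ∈ S, ∃ q ∈ S, p ⊆ q ∧ b ∈ pimg q) {p : Set (α × β)} (hp : p ∈ S) :
    ∃ I ⊆ S, p ∈ I ∧ DirectedOn (· ⊆ ·) I ∧ A ⊆ pdom (⋃₀ I) ∧ B ⊆ pimg (⋃₀ I) := by
  have := hA.to_subtype
  have := hB.to_subtype
  let D : A ⊕ B → Set (Set (α × β)) :=
    Sum.elim (fun a => {q | ↑a ∈ pdom q}) fun b => {q | ↑b ∈ pimg q}
  have hD : ∀ i, ∀ s ∈ S, ∃ t ∈ S, s ≤ t ∧ t ∈ D i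
    | .inl a => forth a a.2
    | .inr b => back b b.2
  obtain ⟨I, hIS, hpI, hdir, hmeet⟩ := exists_directedOn_inter_nonempty hD hp
  refine ⟨I, hIS, hpI, hdir, fun a ha => ?_, fun b hb => ?_⟩
  · obtain ⟨q, hqI, haq⟩ := hmeet (.inl ⟨a, ha⟩)
    exact image_mono (subset_sUnion_of_mem hqI) haq
  · obtain ⟨q, hqI, hbq⟩ := hmeet (.inr ⟨b, hb⟩)
    exact image_mono (subset_sUnion_of_mem hqI) hbq

end BackAndForth

namespace IsPartialEmbedding

variable {M N : Type u} [L.Structure M] [L.Structure N] {p q : Set (M × N)}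

theorem mono (hq : IsPartialEmbedding (L := L) q) (hpq : p ⊆ q) : IsPartialEmbedding (L := L) p :=
  fun n φ hφ a b hab => hq n φ hφ a b fun i => hpq (hab i)

theorem inv (hp : IsPartialEmbedding (L := L) p) : IsPartialEmbedding (L := L) (SetRel.inv p) :=
  fun n φ hφ a b hab => (hp n φ hφ b a hab).symm

theorem eq_of_mem (hp : IsPartialEmbedding (L := L) p) {a : M} {b c : N} (hb : (a, b) ∈ p)
    (hc : (a, c) ∈ p) : b = c := by
  have hpair : ∀ i, (![a, a] i, ![b, c] i) ∈ p := Fin.forall_fin_two.2 ⟨hb, hc⟩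
  simpa using hp 2 (Term.equal (.var 0) (.var 1)) (BoundedFormula.IsAtomic.equal _ _).isQF _ _ hpair

theorem pimage_pdom_of_subset (hq : IsPartialEmbedding (L := L) q) (hpq : p ⊆ q) :
    pimage q (pdom p) = pimg p := by
  ext b
  constructor
  · rintro ⟨a, ⟨⟨a, c⟩, hac, rfl⟩, hab⟩
    rw [hq.eq_of_mem hab (hpq hac)]
    exact mem_image_of_mem Prod.snd hac
  · rintro ⟨⟨a, b⟩, hab, rfl⟩
    exact ⟨a, mem_image_of_mem Prod.fst hab, hpq hab⟩

theorem sUnion {I : Set (Set (M × N))} (hne : I.Nonempty) (hdir : DirectedOn (· ⊆ ·) I)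
    (hI : ∀ p ∈ I, IsPartialEmbedding (L := L) p) : IsPartialEmbedding (L := L) (⋃₀ I) := by
  intro n φ hφ a b hab
  obtain ⟨p, hpI, hp⟩ := hdir.exists_mem_subset_of_finite_of_subset_sUnion hne
    (finite_range fun i => (a i, b i)) (range_subset_iff.2 hab)
  exact hI p hpI n φ hφ a b (range_subset_iff.1 hp)

end IsPartialEmbedding

namespace IsPregeometry

variable {α : Type*} {cl : Set α → Set α} {X : Set α}

theorem cl_insert_of_mem (hcl : IsPregeometry cl) {a : α} (ha : a ∈ cl X) :
    cl (insert a X) = cl X := by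
  refine Subset.antisymm ?_ (hcl.mono (subset_insert a X))
  calc cl (insert a X) ⊆ cl (cl X) := hcl.mono (insert_subset ha (hcl.subset_cl X))
    _ = cl X := hcl.idem X

theorem countable_cl (hcl : IsPregeometry cl) (hfin : ∀ F : Set α, F.Finite → (cl F).Countable)
    (hX : X.Countable) : (cl X).Countable := by
  have hcover : cl X ⊆ ⋃ F ∈ {F : Set α | F.Finite ∧ F ⊆ X}, cl F := by
    intro y hy
    obtain ⟨F, hFX, hyF⟩ := hcl.finChar X y hy
    exact mem_biUnion (show ↑F ∈ {F : Set α | F.Finite ∧ F ⊆ X} from ⟨F.finite_toSet, hFX⟩) hyF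
  exact ((countable_ofPred_finite_subset hX).biUnion fun F hF => hfin F hF.1).mono hcover

end IsPregeometry

theorem CCOE.countable {H : QMObj.{u} L} {G : Set H.carrier} (hG : CCOE H G) : G.Countable :=
  hG.elim And.left fun h => h ▸ countable_empty

/-- `p` is a partial embedding extending `g` by finitely many pairs, whose domain and image span
`A` and `B`. These are the states of the back-and-forth construction of an isomorphism from `A` onto
`B`; the closures of the domain and the image are prescribed, so that they stay constant. -/
structure IsFiniteExtension {H H' : QMObj.{u} L} (g : Set (H.carrier × H'.carrier))
    (A : Set H.carrier) (B : Set H'.carrier) (p : Set (H.carrier × H'.carrier)) : Prop where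
  subset : g ⊆ p
  finite_sdiff : (p \ g).Finite
  isPartialEmbedding : IsPartialEmbedding (L := L) p
  cl_pdom : H.cl (pdom p) = A
  cl_pimg : H'.cl (pimg p) = B

theorem IsFiniteExtension.inv {H H' : QMObj.{u} L} {g p : Set (H.carrier × H'.carrier)}
    {A : Set H.carrier} {B : Set H'.carrier} (hp : IsFiniteExtension g A B p) :
    IsFiniteExtension (SetRel.inv g) B A (SetRel.inv p) where
  subset := SetRel.inv_mono hp.subset
  finite_sdiff := (hp.finite_sdiff.preimage Prod.swap_injective.injOn :)
  isPartialEmbedding := hp.isPartialEmbedding.inv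
  cl_pdom := by rw [pdom_inv, hp.cl_pimg]
  cl_pimg := by rw [pimg_inv, hp.cl_pdom]

section QMClass

variable {C : Set (QMObj.{u} L)} {H H' : QMObj.{u} L} {g p q : Set (H.carrier × H'.carrier)}
  {A : Set H.carrier} {B : Set H'.carrier}

theorem IsQMClass.mem_cl_pdom_iff_mem_cl_pimg (hC : IsQMClass C) (hH : H ∈ C) (hH' : H' ∈ C)
    (hq : IsPartialEmbedding (L := L) q) (hpq : p ⊆ q) {a : H.carrier} {b : H'.carrier}
    (hab : (a, b) ∈ q) : a ∈ H.cl (pdom p) ↔ b ∈ H'.cl (pimg p) := by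
  rw [hC.cl_embedding H hH H' hH' q hq (pdom p) (image_mono hpq) a b hab,
    hq.pimage_pdom_of_subset hpq]

theorem IsQMClass.exists_isPartialEmbedding_insert (hC : IsQMClass C) (hH : H ∈ C) (hH' : H' ∈ C)
    (hG : CCOE H (pdom g)) (hG' : CCOE H' (pimg g)) (hgp : g ⊆ p) (hfin : (pdom (p \ g)).Finite)
    (hp : IsPartialEmbedding (L := L) p) {a : H.carrier} (ha : a ∈ H.cl (pdom p)) :
    ∃ b, IsPartialEmbedding (L := L) (insert (a, b) p) := by
  have hunion : g ∪ p \ g = p := union_sdiff_cancel hgp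
  have ha' : a ∈ H.cl (pdom (p \ g) ∪ pdom g) := by rwa [← pdom_union, union_comm, hunion]
  obtain ⟨b, hb⟩ :=
    hC.homogeneity₂ H hH H' hH' g (p \ g) hG hG' (hp.mono hgp) hfin (by rwa [hunion]) a ha'
  exact ⟨b, by rwa [hunion, union_singleton] at hb⟩

namespace IsFiniteExtension

theorem insert (hC : IsQMClass C) (hH : H ∈ C) (hH' : H' ∈ C) (hp : IsFiniteExtension g A B p)
    {a : H.carrier} {b : H'.carrier} (ha : a ∈ A)
    (hab : IsPartialEmbedding (L := L) (insert (a, b) p)) :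
    IsFiniteExtension g A B (insert (a, b) p) where
  subset := hp.subset.trans (subset_insert _ _)
  finite_sdiff := (hp.finite_sdiff.insert (a, b)).subset (insert_sdiff_subset ..)
  isPartialEmbedding := hab
  cl_pdom := by
    rw [pdom_insert, (hC.pregeom H hH).cl_insert_of_mem (hp.cl_pdom ▸ ha), hp.cl_pdom]
  cl_pimg := by
    have hb : b ∈ H'.cl (pimg p) :=
      (hC.mem_cl_pdom_iff_mem_cl_pimg hH hH' hab (subset_insert _ _) (mem_insert _ _)).1
        (hp.cl_pdom ▸ ha)
    rw [pimg_insert, (hC.pregeom H' hH').cl_insert_of_mem hb, hp.cl_pimg]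

theorem exists_mem_pdom (hC : IsQMClass C) (hH : H ∈ C) (hH' : H' ∈ C) (hG : CCOE H (pdom g))
    (hG' : CCOE H' (pimg g)) {a : H.carrier} (ha : a ∈ A) (hp : IsFiniteExtension g A B p) :
    ∃ q, IsFiniteExtension g A B q ∧ p ⊆ q ∧ a ∈ pdom q := by
  obtain ⟨b, hab⟩ := hC.exists_isPartialEmbedding_insert hH hH' hG hG' hp.subset
    (hp.finite_sdiff.image Prod.fst) hp.isPartialEmbedding (hp.cl_pdom ▸ ha)
  exact ⟨_, hp.insert hC hH hH' ha hab, subset_insert _ _, by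
    rw [pdom_insert]
    exact mem_insert _ _⟩

theorem exists_mem_pimg (hC : IsQMClass C) (hH : H ∈ C) (hH' : H' ∈ C) (hG : CCOE H (pdom g))
    (hG' : CCOE H' (pimg g)) {b : H'.carrier} (hb : b ∈ B) (hp : IsFiniteExtension g A B p) :
    ∃ q, IsFiniteExtension g A B q ∧ p ⊆ q ∧ b ∈ pimg q := by
  obtain ⟨q, hq, hpq, hbq⟩ := exists_mem_pdom hC hH' hH (by rwa [pdom_inv]) (by rwa [pimg_inv])
    hb hp.inv
  exact ⟨SetRel.inv q, hq.inv, SetRel.inv_mono hpq, by rwa [pimg_inv]⟩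

theorem pdom_subset (hC : IsQMClass C) (hH : H ∈ C) (hp : IsFiniteExtension g A B p) :
    pdom p ⊆ A :=
  hp.cl_pdom ▸ (hC.pregeom H hH).subset_cl (pdom p)

theorem pimg_subset (hC : IsQMClass C) (hH' : H' ∈ C) (hp : IsFiniteExtension g A B p) :
    pimg p ⊆ B :=
  hp.cl_pimg ▸ (hC.pregeom H' hH').subset_cl (pimg p)

theorem countable_left (hC : IsQMClass C) (hH : H ∈ C) (hg : (pdom g).Countable)
    (hp : IsFiniteExtension g A B p) : A.Countable := by
  have hpdom : (pdom p).Countable := by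
    rw [← union_sdiff_cancel hp.subset, pdom_union]
    exact hg.union (hp.finite_sdiff.image Prod.fst).countable
  rw [← hp.cl_pdom]
  exact (hC.pregeom H hH).countable_cl (hC.cl_finite_countable H hH) hpdom

theorem countable_right (hC : IsQMClass C) (hH' : H' ∈ C) (hg : (pimg g).Countable)
    (hp : IsFiniteExtension g A B p) : B.Countable :=
  hp.inv.countable_left hC hH' (by rwa [pdom_inv])

theorem exists_isPartialEmbedding_pdom_eq_pimg_eq (hC : IsQMClass C) (hH : H ∈ C) (hH' : H' ∈ C)
    (hG : CCOE H (pdom g)) (hG' : CCOE H' (pimg g))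
    (hp : IsFiniteExtension g A B p) :
    ∃ q, p ⊆ q ∧ IsPartialEmbedding (L := L) q ∧ pdom q = A ∧ pimg q = B := by
  obtain ⟨I, hI, hpI, hdir, hAI, hBI⟩ :=
    exists_directedOn_of_back_and_forth (S := {p | IsFiniteExtension g A B p})
      (hp.countable_left hC hH hG.countable) (hp.countable_right hC hH' hG'.countable)
      (fun a ha p hp => hp.exists_mem_pdom hC hH hH' hG hG' ha)
      (fun b hb p hp => hp.exists_mem_pimg hC hH hH' hG hG' hb) hp
  have hdom : pdom (⋃₀ I) ⊆ A := by
    rw [pdom, sUnion_eq_biUnion, image_iUnion₂]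
    exact iUnion₂_subset fun q hq => (hI hq).pdom_subset hC hH
  have himg : pimg (⋃₀ I) ⊆ B := by
    rw [pimg, sUnion_eq_biUnion, image_iUnion₂]
    exact iUnion₂_subset fun q hq => (hI hq).pimg_subset hC hH'
  exact ⟨⋃₀ I, subset_sUnion_of_mem hpI,
    .sUnion ⟨p, hpI⟩ hdir fun q hq => (hI hq).isPartialEmbedding,
    hdom.antisymm hAI, himg.antisymm hBI⟩

end IsFiniteExtension

end QMClass

/-- Given `H, H' ∈ C`, countable closed or empty `G ⊆ H`, `G' ⊆ H'`, an
isomorphism `g : G → G'` and a partial embedding `g ∪ f` with `X = dom f`, `X' = img f`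
finite, the map `g ∪ f` extends to an isomorphism `ĝ : cl(X ∪ G) → cl(X' ∪ G')`. -/
theorem statement_1 {L : FirstOrder.Language.{v, w}} (C : Set (QMObj.{u} L))
    (hC : IsQMClass C) (H : QMObj.{u} L) (hH : H ∈ C) (H' : QMObj.{u} L) (hH' : H' ∈ C)
    (g f : Set (H.carrier × H'.carrier))
    (hG : CCOE H (pdom g)) (hG' : CCOE H' (pimg g))
    (hg : IsPartialEmbedding (L := L) g)
    (hgf : IsPartialEmbedding (L := L) (g ∪ f))
    (hXfin : (pdom f).Finite) (hX'fin : (pimg f).Finite) :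
    ∃ ghat : Set (H.carrier × H'.carrier), g ∪ f ⊆ ghat ∧
      IsPartialEmbedding (L := L) ghat ∧
      pdom ghat = H.cl (pdom f ∪ pdom g) ∧ pimg ghat = H'.cl (pimg f ∪ pimg g) := by
  have hf : f.Finite := (hXfin.prod hX'fin).subset subset_fst_image_prod_snd_image
  have hext : IsFiniteExtension g (H.cl (pdom f ∪ pdom g)) (H'.cl (pimg f ∪ pimg g)) (g ∪ f) :=
    { subset := subset_union_left
      finite_sdiff := hf.subset (union_sdiff_left.trans_subset sdiff_subset)
      isPartialEmbedding := hgf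
      cl_pdom := by rw [pdom_union, union_comm]
      cl_pimg := by rw [pimg_union, union_comm] }
  exact hext.exists_isPartialEmbedding_pdom_eq_pimg_eq hC hH hH' hG hG'

end QM
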